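/- Let f be a cellular automaton on A^ℤ and suppose that the restriction of f to ω̃(f) is eventually oblique, i.e., for some n ∈ ℕ the map f^n restricted to ω̃(f) has a neighborhood contained in (−∞, −1] or in [1, ∞) (there exist integers a ≤ b with b ≤ −1 or a ≥ 1 such that for all x ∈ ω̃(f), f^n(x)_0 is determined by x_{[a,b]}). Then the language L(ω̃(f)) is a Π⁰₂ set of words. -/

import Mathlib

open Filter Set Function

namespace Gls

variable {A : Type*}

/-- The left shift map on `A^ℤ`. -/
def shift (x : ℤ → A) : ℤ → A := fun i => x (i + 1)

/-- A cellular automaton: a continuous shift-commuting self-map of the full shift. -/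
def IsCA [TopologicalSpace A] (f : (ℤ → A) → (ℤ → A)) : Prop :=
  Continuous f ∧ f ∘ shift = shift ∘ f

/-- The set of limit points of the forward orbit of `x` under `f`. -/
def omegaSet [TopologicalSpace A] (f : (ℤ → A) → (ℤ → A)) (x : ℤ → A) : Set (ℤ → A) :=
  {y | MapClusterPt y atTop fun t => f^[t] x}

/-- The realm of attraction of `Y`. -/
def realm [TopologicalSpace A] (f : (ℤ → A) → (ℤ → A)) (Y : Set (ℤ → A)) : Set (ℤ → A) :=
  {x | omegaSet f x ⊆ Y}

/-- The generic limit set: the intersection of all closed sets whose realm is comeager. -/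
def genLimitSet [TopologicalSpace A] (f : (ℤ → A) → (ℤ → A)) : Set (ℤ → A) :=
  ⋂₀ {C | IsClosed C ∧ realm f C ∈ residual (ℤ → A)}

/-- The word `x_{[i, i+n)}` of length `n` read in the configuration `x` from position `i`. -/
def word (x : ℤ → A) (i : ℤ) (n : ℕ) : List A :=
  (List.range n).map fun k => x (i + k)

/-- The cylinder set `[w]_i`. -/
def cylinder (w : List A) (i : ℤ) : Set (ℤ → A) := {x | word x i w.length = w}

/-- The language of `X`: all finite words occurring in points of `X`. -/
def lang (X : Set (ℤ → A)) : Set (List A) :=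
  {w | ∃ x ∈ X, ∃ i : ℤ, word x i w.length = w}


/-- The arithmetical hierarchy over `ℕ`: `NatSigma 0` is the class of computable
predicates, and a predicate is `NatSigma (n+1)` (i.e. `Σ⁰ₙ₊₁`) if it is of the form
`{a | ∃ k, (a, k) ∈ R}` for a `Π⁰ₙ` relation `R` (i.e. a relation whose complement is `Σ⁰ₙ`). -/
def NatSigma : ℕ → (ℕ → Prop) → Prop
  | 0 => fun P => ComputablePred P
  | (n + 1) => fun P =>
      ∃ R : ℕ → Prop, NatSigma n (fun a => ¬ R a) ∧ ∀ a, P a ↔ ∃ k, R (Nat.pair a k)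

/-- A set of words is `Σ⁰ₙ` if, identifying words with natural numbers via the canonical
computable encoding, it is a `Σ⁰ₙ` subset of `ℕ`. -/
def SigmaLang {A : Type*} [Primcodable A] (n : ℕ) (P : Set (List A)) : Prop :=
  NatSigma n (fun m => ∃ w : List A, Encodable.encode w = m ∧ w ∈ P)

/-- A set of words is `Π⁰ₙ` if its complement is `Σ⁰ₙ`. -/
def PiLang {A : Type*} [Primcodable A] (n : ℕ) (P : Set (List A)) : Prop :=
  SigmaLang n {w | w ∉ P}

/-- The restriction of `f` to `X` is eventually oblique: for some `n`, the map `f^n`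
restricted to `X` has a neighborhood `[a, b]` contained in `(-∞, -1]` or in `[1, ∞)`,
i.e. for `x ∈ X`, the symbol `f^n(x)_0` only depends on `x_{[a,b]}`. -/
def EventuallyOblique {A : Type*} (f : (ℤ → A) → (ℤ → A)) (X : Set (ℤ → A)) : Prop :=
  ∃ (n : ℕ) (a b : ℤ), a ≤ b ∧ (b ≤ -1 ∨ 1 ≤ a) ∧
    ∀ x ∈ X, ∀ y ∈ X, (∀ i : ℤ, a ≤ i → i ≤ b → x i = y i) → f^[n] x 0 = f^[n] y 0

/-!
A word `s` lies in `L(ω̃(f))` if and only if every cylinder contains points that visit `[s]_0` at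
arbitrarily late times. As `f` acts computably on finite words, this is a `Π⁰₂` condition: for all
words `p` and times `l` there are a time `t ≥ l` and a finite pattern that contains `p` and evolves
into `s`.

The substance is that the visits occur in *every* cylinder. If `[s]_0` meets `ω̃(f)`, a Baire
category argument gives some nonempty open `U` whose generic points visit `[s]_0` infinitely often.
Up to reflection, `f^n` restricted to `ω̃(f)` only looks to the right, and by compactness it still
does so, on any finite window, near `ω̃(f)`. Hence some word `w` is blocking: since the orbits of an
entire neighborhood of `w` eventually stay near `ω̃(f)`, nothing to the left of `w` ever influences
what happens to its right. Given an open set `V`, choose generic `x ∈ U` and `y ∈ V` with a common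
right tail that starts with `w`. The orbits of `x` and `y` then agree forever on a right half-line,
and, being attracted to `ω̃(f)`, they come to agree one cell further to the left every `n` steps. So
they eventually agree on any given window, and `y` visits `[s]_0` infinitely often along with `x`.
-/

section UniformBasin

open scoped Topology

variable {X : Type*} [TopologicalSpace X] {f : X → X}

/-- The uniform basin of `K` under `f`: the points having a neighborhood all of whose orbits lie
in `K` from a common time on. It is the open counterpart of the set of points whose orbit
eventually stays in `K`, from which it differs by a meager set when `K` is closed. -/
def uniformBasin (f : X → X) (K : Set X) : Set X :=
  {x | ∃ T : ℕ, ∀ᶠ y in 𝓝 x, ∀ t ≥ T, f^[t] y ∈ K}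

lemma uniformBasin_mono {K K' : Set X} (h : K ⊆ K') : uniformBasin f K ⊆ uniformBasin f K' :=
  fun _ ⟨T, hT⟩ => ⟨T, hT.mono fun _ hy t ht => h (hy t ht)⟩

lemma isOpen_uniformBasin (f : X → X) (K : Set X) : IsOpen (uniformBasin f K) :=
  isOpen_iff_eventually.2 fun _ ⟨T, hT⟩ => hT.eventually_nhds.mono fun _ hy => ⟨T, hy⟩

lemma eventually_mem_of_mem_uniformBasin {K : Set X} {x : X} (hx : x ∈ uniformBasin f K) :
    ∀ᶠ t in atTop, f^[t] x ∈ K := by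
  obtain ⟨T, hT⟩ := hx
  exact eventually_atTop.2 ⟨T, hT.self_of_nhds⟩

lemma residual_mem_uniformBasin (hf : Continuous f) {K : Set X} (hK : IsClosed K) :
    ∀ᶠ x in residual X, (∀ᶠ t in atTop, f^[t] x ∈ K) → x ∈ uniformBasin f K := by
  let F : ℕ → Set X := fun T => ⋂ t ≥ T, f^[t] ⁻¹' K
  have hF (T : ℕ) : IsClosed (F T) := isClosed_biInter fun t _ => hK.preimage (hf.iterate t)
  have notMem_frontier : ∀ᶠ x in residual X, ∀ T, x ∉ frontier (F T) :=
    eventually_countable_forall.2 fun T => residual_of_dense_open isClosed_frontier.isOpen_compl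
      (interior_eq_empty_iff_dense_compl.1 (interior_frontier (hF T)))
  filter_upwards [notMem_frontier] with x hx hxK
  obtain ⟨T, hT⟩ := eventually_atTop.1 hxK
  have hxF : x ∈ F T := mem_iInter₂.2 hT
  have hxint : x ∈ interior (F T) := by
    by_contra h
    exact hx T ((hF T).frontier_eq ▸ ⟨hxF, h⟩)
  exact ⟨T, mem_of_superset (mem_interior_iff_mem_nhds.1 hxint) fun y hy => mem_iInter₂.1 hy⟩

lemma exists_isOpen_residual_frequently_mem (hf : Continuous f) {W : Set X} (hW : IsOpen W)
    (h : ¬ ∀ᶠ x in residual X, ∀ᶠ t in atTop, f^[t] x ∉ W) :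
    ∃ V : Set X, IsOpen V ∧ V.Nonempty ∧
      ∀ᶠ x in residual X, x ∈ V → ∃ᶠ t in atTop, f^[t] x ∈ W := by
  have not_dense : ¬ Dense (uniformBasin f Wᶜ) := fun hd =>
    h (mem_of_superset (residual_of_dense_open (isOpen_uniformBasin f Wᶜ) hd)
      fun _ => eventually_mem_of_mem_uniformBasin)
  refine ⟨(closure (uniformBasin f Wᶜ))ᶜ, isClosed_closure.isOpen_compl, ?_, ?_⟩
  · rwa [nonempty_compl, Ne, ← dense_iff_closure_eq]
  · filter_upwards [residual_mem_uniformBasin hf hW.isClosed_compl] with x hx hxV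
    exact fun hxW => hxV (subset_closure (hx hxW))

end UniformBasin

section GenericLimitSet

variable [TopologicalSpace A] {f g : (ℤ → A) → (ℤ → A)}

lemma isClosed_genLimitSet (f : (ℤ → A) → (ℤ → A)) : IsClosed (genLimitSet f) :=
  isClosed_sInter fun _ hC => hC.1

lemma disjoint_genLimitSet {W : Set (ℤ → A)} (hW : IsOpen W)
    (h : ∀ᶠ x in residual (ℤ → A), ∀ᶠ t in atTop, f^[t] x ∉ W) :
    Disjoint W (genLimitSet f) := by
  have hrealm : realm f Wᶜ ∈ residual (ℤ → A) :=
    mem_of_superset h fun _ hx _ hy => hW.isClosed_compl.mem_of_mapClusterPt hy hx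
  exact disjoint_left.2 fun y hyW hy => hy Wᶜ ⟨hW.isClosed_compl, hrealm⟩ hyW

lemma realm_genLimitSet_mem_residual [SecondCountableTopology A] (f : (ℤ → A) → (ℤ → A)) :
    realm f (genLimitSet f) ∈ residual (ℤ → A) := by
  let S : Set (Set (ℤ → A)) := {C | IsClosed C ∧ realm f C ∈ residual (ℤ → A)}
  obtain ⟨T, hTc, hTS, hT⟩ := TopologicalSpace.isOpen_sUnion_countable (compl '' S)
    (by rintro _ ⟨C, hC, rfl⟩; exact hC.1.isOpen_compl)
  have hresidual : ∀ᶠ x in residual (ℤ → A), ∀ U ∈ T, x ∈ realm f Uᶜ := by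
    refine (eventually_countable_ball hTc).2 fun U hU => ?_
    obtain ⟨C, hC, rfl⟩ := hTS hU
    exact (compl_compl C).symm ▸ hC.2
  filter_upwards [hresidual] with x hx y hy C hC
  by_contra hyC
  have hyT : y ∈ ⋃₀ T := hT ▸ mem_sUnion_of_mem hyC (mem_image_of_mem compl hC)
  obtain ⟨U, hU, hyU⟩ := hyT
  exact hx U hU hy hyU

lemma eventually_mem_of_mem_realm [CompactSpace A] {Y U : Set (ℤ → A)} (hU : IsOpen U)
    (hYU : Y ⊆ U) {x : ℤ → A} (hx : x ∈ realm f Y) : ∀ᶠ t in atTop, f^[t] x ∈ U := by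
  by_contra h
  obtain ⟨y, hyU, hy⟩ := hU.isClosed_compl.isCompact.exists_mapClusterPt_of_frequently
    (not_eventually.1 h)
  exact hyU (hYU (hx hy))

lemma dense_uniformBasin [CompactSpace A] [T2Space A] [SecondCountableTopology A]
    (hf : Continuous f) {U : Set (ℤ → A)} (hU : IsOpen U) (hgU : genLimitSet f ⊆ U) :
    Dense (uniformBasin f U) := by
  obtain ⟨V, hV, hgV, hVU⟩ := normal_exists_closure_subset (isClosed_genLimitSet f) hU hgU
  refine Dense.mono (uniformBasin_mono hVU) (dense_of_mem_residual ?_)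
  filter_upwards [realm_genLimitSet_mem_residual f,
    residual_mem_uniformBasin hf isClosed_closure] with x hx hxV
  exact hxV ((eventually_mem_of_mem_realm hV hgV hx).mono fun _ ht => subset_closure ht)

lemma map_mem_genLimitSet {S : (ℤ → A) → (ℤ → A)} (hS : Continuous S) (hSo : IsOpenMap S)
    (h : Semiconj S f g) {y : ℤ → A} (hy : y ∈ genLimitSet f) : S y ∈ genLimitSet g := by
  rintro C ⟨hC, hrealm⟩
  refine hy (S ⁻¹' C) ⟨hC.preimage hS, ?_⟩
  refine mem_of_superset (tendsto_residual_of_isOpenMap hS hSo hrealm) fun x hx z hz => hx ?_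
  have hcluster : MapClusterPt (S z) atTop (S ∘ fun t => f^[t] x) :=
    MapClusterPt.continuousAt_comp hS.continuousAt hz
  rwa [show (S ∘ fun t => f^[t] x) = fun t => g^[t] (S x) from
    funext fun t => h.iterate_right t x] at hcluster

end GenericLimitSet

section Gluing

variable {ι : Type*} (s : Set ι) [∀ i, Decidable (i ∈ s)]

lemma continuous_piecewise_prod [TopologicalSpace A] :
    Continuous fun p : (ι → A) × (ι → A) => s.piecewise p.2 p.1 := by
  refine continuous_pi fun i => ?_
  by_cases hi : i ∈ s
  · simpa only [piecewise_eq_of_mem _ _ _ hi] using (continuous_apply i).comp' continuous_snd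
  · simpa only [piecewise_eq_of_notMem _ _ _ hi] using (continuous_apply i).comp' continuous_fst

lemma isOpenMap_piecewise_prod [TopologicalSpace A] :
    IsOpenMap fun p : (ι → A) × (ι → A) => s.piecewise p.2 p.1 := by
  refine IsOpenMap.of_sections fun p =>
    ⟨fun z => (s.piecewise p.1 z, s.piecewise z p.2), Continuous.continuousAt ?_, ?_, ?_⟩
  · exact ((continuous_piecewise_prod s).comp (continuous_id.prodMk continuous_const)).prodMk
      ((continuous_piecewise_prod s).comp (continuous_const.prodMk continuous_id))
  · ext i <;> by_cases hi : i ∈ s <;> simp [hi]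
  · intro z
    ext i
    by_cases hi : i ∈ s <;> simp [hi]

/-- A Kuratowski–Ulam phenomenon: two generic configurations may be chosen with a prescribed common
part, since `(x, y) ↦ x` and `(x, y) ↦ s.piecewise y x` are both continuous and open. -/
lemma residual_prod_piecewise [TopologicalSpace A] {P : (ι → A) → Prop}
    (hP : ∀ᶠ x in residual (ι → A), P x) :
    ∀ᶠ p in residual ((ι → A) × (ι → A)), P p.1 ∧ P (s.piecewise p.2 p.1) :=
  ((tendsto_residual_of_isOpenMap continuous_fst isOpenMap_fst).eventually hP).and
    ((tendsto_residual_of_isOpenMap (continuous_piecewise_prod s)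
      (isOpenMap_piecewise_prod s)).eventually hP)

end Gluing

section CellularAutomata

/-- The cylinder of configurations agreeing with `x` on `[-n, n]`; these sets form a neighborhood
basis of `x` when `A` is discrete. -/
def window (x : ℤ → A) (n : ℕ) : Set (ℤ → A) := {y | EqOn y x (Icc (-n) n)}

lemma self_mem_window (x : ℤ → A) (n : ℕ) : x ∈ window x n := eqOn_refl x _

lemma window_anti (x : ℤ → A) {m n : ℕ} (h : m ≤ n) : window x n ⊆ window x m :=
  fun _ hy => hy.mono (Icc_subset_Icc (by lia) (by lia))

/-- The map `f` has radius `r` if `f(x)_j` only depends on `x_{[j-r, j+r]}`. -/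
def HasRadius (f : (ℤ → A) → (ℤ → A)) (r : ℕ) : Prop :=
  ∀ x y : ℤ → A, ∀ j : ℤ, EqOn x y (Icc (j - r) (j + r)) → f x j = f y j

lemma HasRadius.iterate {f : (ℤ → A) → (ℤ → A)} {r : ℕ} (hr : HasRadius f r) (t : ℕ) :
    HasRadius f^[t] (r * t) := by
  induction t with
  | zero => exact fun x y j h => h ⟨by lia, by lia⟩
  | succ t ih =>
    intro x y j h
    rw [iterate_succ_apply', iterate_succ_apply']
    refine hr _ _ j fun k hk => ih x y k (h.mono ?_)
    obtain ⟨hk₁, hk₂⟩ := hk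
    exact Icc_subset_Icc (by grind) (by grind)

variable [TopologicalSpace A]

lemma isOpen_window [DiscreteTopology A] (x : ℤ → A) (n : ℕ) : IsOpen (window x n) := by
  have : window x n = (Icc (-n : ℤ) n).pi fun i => {x i} := by ext y; rfl
  rw [this]
  exact isOpen_set_pi (finite_Icc _ _) fun _ _ => isOpen_discrete _

lemma exists_window_subset {U : Set (ℤ → A)} (hU : IsOpen U) {x : ℤ → A} (hx : x ∈ U) :
    ∃ n, window x n ⊆ U := by
  obtain ⟨I, u, hu, hIU⟩ := isOpen_pi_iff.1 hU x hx
  refine ⟨I.sup Int.natAbs, fun y hy => hIU fun i hi => ?_⟩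
  have hi' : i.natAbs ≤ I.sup Int.natAbs := Finset.le_sup (f := Int.natAbs) hi
  exact hy (show i ∈ Icc _ _ from ⟨by lia, by lia⟩) ▸ (hu i hi).2

/-- The translation `σ^j` of configurations by an arbitrary integer `j`. -/
def translate (j : ℤ) : (ℤ → A) ≃ₜ (ℤ → A) :=
  (Homeomorph.piCongrLeft (Y := fun _ => A) (Equiv.addRight j)).symm

lemma translate_apply (j : ℤ) (x : ℤ → A) (i : ℤ) : translate j x i = x (i + j) := rfl

variable {f : (ℤ → A) → (ℤ → A)}

lemma IsCA.translate_semiconj (hf : IsCA f) (j : ℤ) : Semiconj (translate j) f f := by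
  have hone : Semiconj (translate 1) f f := fun x => (congrFun hf.2 x).symm
  have hinv : Semiconj (translate (-1)) f f := hone.inverse_left
    (fun x => funext fun i => congrArg x (neg_add_cancel_right i 1))
    (fun x => funext fun i => congrArg x (add_neg_cancel_right i 1))
  have hadd (a b : ℤ) : (translate (A := A) (a + b) : (ℤ → A) → ℤ → A) =
      translate a ∘ translate b :=
    funext₂ fun x i => congrArg x (add_assoc i a b).symm
  have hzero : (translate (A := A) 0 : (ℤ → A) → ℤ → A) = id :=
    funext₂ fun x i => congrArg x (add_zero i)
  induction j with
  | zero => exact hzero ▸ Semiconj.id_left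
  | succ n ih => exact hadd n 1 ▸ ih.comp_left hone
  | pred n ih => exact hadd (-n) (-1) ▸ ih.comp_left hinv

lemma IsCA.apply_add (hf : IsCA f) (x : ℤ → A) (i j : ℤ) :
    f x (i + j) = f (translate j x) i :=
  congrFun (hf.translate_semiconj j x) i

lemma IsCA.iterate (hf : IsCA f) (n : ℕ) : IsCA f^[n] :=
  have h : Function.Commute f shift := congrFun hf.2
  ⟨hf.1.iterate n, (h.iterate_left n).comp_eq⟩

/-- The reversal of configurations, exchanging left and right. -/
def reversal : (ℤ → A) ≃ₜ (ℤ → A) :=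
  (Homeomorph.piCongrLeft (Y := fun _ => A) (Equiv.neg ℤ)).symm

lemma reversal_apply (x : ℤ → A) (i : ℤ) : reversal x i = x (-i) := rfl

lemma reversal_involutive : Involutive (reversal : (ℤ → A) → ℤ → A) :=
  fun x => funext fun i => congrArg x (neg_neg i)

/-- The mirror image of the map `f`, turning left-obliqueness into right-obliqueness. -/
def reverse (f : (ℤ → A) → (ℤ → A)) : (ℤ → A) → (ℤ → A) := reversal ∘ f ∘ reversal

lemma semiconj_reverse (f : (ℤ → A) → (ℤ → A)) : Semiconj reversal (reverse f) f :=
  fun x => reversal_involutive (f (reversal x))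

lemma reverse_semiconj (f : (ℤ → A) → (ℤ → A)) : Semiconj reversal f (reverse f) :=
  (semiconj_reverse f).inverse_left reversal_involutive reversal_involutive

lemma IsCA.reverse (hf : IsCA f) : IsCA (reverse f) := by
  refine ⟨reversal.continuous.comp (hf.1.comp reversal.continuous), funext fun x => ?_⟩
  have reversal_shift : reversal (shift x) = translate (-1) (reversal x) :=
    funext fun i => congrArg x (show -i + 1 = -(i + -1) by lia)
  have reversal_translate (y : ℤ → A) : reversal (translate (-1) y) = shift (reversal y) :=
    funext fun i => congrArg y (neg_add i 1).symm
  change reversal (f (reversal (shift x))) = shift (reversal (f (reversal x)))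
  rw [reversal_shift, ← hf.translate_semiconj, reversal_translate]

lemma IsCA.exists_hasRadius [CompactSpace A] [DiscreteTopology A] (hf : IsCA f) :
    ∃ r, HasRadius f r := by
  have hlocal (x : ℤ → A) : ∃ n, ∀ y ∈ window x n, f y 0 = f x 0 :=
    exists_window_subset ((isOpen_discrete {f x 0}).preimage ((continuous_apply 0).comp hf.1)) rfl
  choose n hn using hlocal
  obtain ⟨s, -, hs⟩ := isCompact_univ.elim_nhds_subcover (fun x => window x (n x))
    fun x _ => (isOpen_window x (n x)).mem_nhds (self_mem_window x _)
  have hzero (x y : ℤ → A) (h : y ∈ window x (s.sup n)) : f x 0 = f y 0 := by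
    obtain ⟨z, hz, hxz⟩ := mem_iUnion₂.1 (hs (mem_univ x))
    have hyz : y ∈ window z (n z) := (window_anti x (Finset.le_sup hz) h).trans hxz
    rw [hn z x hxz, hn z y hyz]
  refine ⟨s.sup n, fun x y j h => ?_⟩
  rw [← zero_add j, hf.apply_add, hf.apply_add]
  refine hzero _ _ fun i hi => (h (show i + j ∈ _ from ?_)).symm
  obtain ⟨hi₁, hi₂⟩ := hi
  exact ⟨by lia, by lia⟩

end CellularAutomata

section Oblique

variable {f : (ℤ → A) → (ℤ → A)} {X : Set (ℤ → A)} {n r : ℕ}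

/-- Right-obliqueness of `f^n` on `X` with the infinite neighborhood `[1, ∞)`: the symbol
`f^n(x)_j` of `x ∈ X` only depends on `x_{(j, ∞)}`. No finite neighborhood is required, since
compactness of `X` supplies one. -/
def RightOblique (f : (ℤ → A) → (ℤ → A)) (X : Set (ℤ → A)) (n : ℕ) : Prop :=
  ∀ x ∈ X, ∀ y ∈ X, ∀ j : ℤ, EqOn x y (Ioi j) → f^[n] x j = f^[n] y j

lemma forall_of_monotone_of_sub_one {p : ℤ → Prop} (hp : Monotone p)
    (step : ∀ c, p c → p (c - 1)) {a : ℤ} (ha : p a) (b : ℤ) : p b :=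
  hp (min_le_right a b)
    (Int.leInductionDown (motive := fun c _ => p c) ha (fun c _ => step c) _ (min_le_left a b))

lemma RightOblique.exists_pos (h : RightOblique f X n) : ∃ m, 0 < m ∧ RightOblique f X m := by
  rcases n.eq_zero_or_pos with rfl | hn
  · refine ⟨1, one_pos, fun x hx y hy j hxy => ?_⟩
    have eqOn_Ioi : ∀ b, EqOn x y (Ioi b) := by
      refine forall_of_monotone_of_sub_one (fun _ _ hcd h => h.mono (Ioi_subset_Ioi hcd))
        (fun c hc => ?_) hxy
      rw [Ioi_sub_one_eq_Ici, ← Ioi_insert, insert_eq, eqOn_union, eqOn_singleton]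
      exact ⟨h x hx y hy c hc, hc⟩
    rw [show x = y from funext fun i => eqOn_Ioi (i - 1) (sub_one_lt i)]
  · exact ⟨n, hn, h⟩

variable [TopologicalSpace A]

lemma IsCA.rightOblique_genLimitSet (hf : IsCA f)
    (h : ∀ x ∈ genLimitSet f, ∀ y ∈ genLimitSet f, EqOn x y (Ioi 0) → f^[n] x 0 = f^[n] y 0) :
    RightOblique f (genLimitSet f) n := by
  intro x hx y hy j hxy
  have hmem {z : ℤ → A} (hz : z ∈ genLimitSet f) : translate j z ∈ genLimitSet f :=
    map_mem_genLimitSet (translate j).continuous (translate j).isOpenMap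
      (hf.translate_semiconj j) hz
  rw [← zero_add j, (hf.iterate n).apply_add, (hf.iterate n).apply_add]
  exact h _ (hmem hx) _ (hmem hy) fun i hi => hxy (show j < i + j from by grind)

variable [DiscreteTopology A]

lemma RightOblique.exists_isOpen_apply_eq (hf : Continuous f) (hX : IsCompact X)
    (h : RightOblique f X n) (j : ℤ) :
    ∃ U, IsOpen U ∧ X ⊆ U ∧
      ∀ x ∈ U, ∀ y ∈ U, EqOn x y (Ioi j) → f^[n] x j = f^[n] y j := by
  let S : Set ((ℤ → A) × (ℤ → A)) :=
    {p | EqOn p.1 p.2 (Ioi j) → f^[n] p.1 j = f^[n] p.2 j}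
  have hfj : Continuous fun x => f^[n] x j := (continuous_apply j).comp (hf.iterate n)
  have hclosed : IsClosed {p : (ℤ → A) × (ℤ → A) | EqOn p.1 p.2 (Ioi j)} := by
    simp only [EqOn, ofPred_forall]
    exact isClosed_biInter fun i _ => isClosed_eq (by fun_prop) (by fun_prop)
  have hopen : IsOpen {p : (ℤ → A) × (ℤ → A) | f^[n] p.1 j = f^[n] p.2 j} :=
    (isOpen_discrete (diagonal A)).preimage
      ((hfj.comp continuous_fst).prodMk (hfj.comp continuous_snd))
  have hS : IsOpen S := by
    convert hclosed.isOpen_compl.union hopen using 1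
    exact ext fun p => imp_iff_not_or
  obtain ⟨U, V, hU, hV, hXU, hXV, hUV⟩ :=
    generalized_tube_lemma hX hX hS fun p hp => h p.1 hp.1 p.2 hp.2 j
  exact ⟨U ∩ V, hU.inter hV, subset_inter hXU hXV, fun x hx y hy => @hUV (x, y) ⟨hx.1, hy.2⟩⟩

lemma RightOblique.exists_isOpen_eqOn (hf : Continuous f) (hr : HasRadius f r) (hX : IsCompact X)
    (h : RightOblique f X n) (a : ℤ) :
    ∃ U, IsOpen U ∧ X ⊆ U ∧
      ∀ x ∈ U, ∀ y ∈ U, EqOn x y (Ioi a) → EqOn (f^[n] x) (f^[n] y) (Ici a) := by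
  choose U hU hXU hUeq using h.exists_isOpen_apply_eq hf hX
  refine ⟨⋂ j ∈ Icc a (a + r * n), U j, (finite_Icc _ _).isOpen_biInter fun j _ => hU j,
    subset_iInter₂ fun j _ => hXU j, fun x hx y hy hxy j (hj : a ≤ j) => ?_⟩
  by_cases hjr : j ≤ a + r * n
  · exact hUeq j x (mem_iInter₂.1 hx j ⟨hj, hjr⟩) y (mem_iInter₂.1 hy j ⟨hj, hjr⟩)
      (hxy.mono (Ioi_subset_Ioi hj))
  · refine hr.iterate n x y j (hxy.mono fun i hi => ?_)
    push_cast at hi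
    exact show a < i by grind

lemma RightOblique.exists_blocking [Finite A] [Nonempty A] (hf : IsCA f)
    (h : RightOblique f (genLimitSet f) n) :
    ∃ (w : ℤ → A) (L : ℕ), ∀ x ∈ window w L, ∀ y, EqOn x y (Ici (-L)) →
      ∀ t, EqOn (f^[t] x) (f^[t] y) (Ici 0) := by
  obtain ⟨m, hm, hob⟩ := h.exists_pos
  obtain ⟨r, hr⟩ := hf.exists_hasRadius
  obtain ⟨U, hU, hgU, hUeq⟩ :=
    hob.exists_isOpen_eqOn hf.1 hr (isClosed_genLimitSet f).isCompact 0
  obtain ⟨w, T, hT⟩ := (dense_uniformBasin hf.1 hU hgU).nonempty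
  obtain ⟨C, hC⟩ : ∃ C, window w C ⊆ {x | ∀ t ≥ T, f^[t] x ∈ U} := by
    obtain ⟨V, hVT, hV, hwV⟩ := mem_nhds_iff.1 hT
    exact (exists_window_subset hV hwV).imp fun C hCV => hCV.trans hVT
  refine ⟨w, max C (r * (T + m)), fun x hx y hxy t => ?_⟩
  have hy : y ∈ window w (max C (r * (T + m))) := fun i hi => (hxy hi.1).symm.trans (hx hi)
  induction t using Nat.strong_induction_on with
  | _ t ih =>
    rcases lt_or_ge t (T + m) with ht | ht
    · intro j (hj : 0 ≤ j)
      refine hr.iterate t x y j (hxy.mono fun i hi => ?_)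
      have hrt : r * t ≤ r * (T + m) := Nat.mul_le_mul_left r ht.le
      obtain ⟨hi, -⟩ := hi
      exact show _ ≤ i by lia
    · obtain ⟨s, rfl⟩ := Nat.exists_eq_add_of_le (le_of_add_le_right ht)
      rw [iterate_add_apply, iterate_add_apply]
      exact hUeq _ (hC (window_anti w (le_max_left _ _) hx) s (by lia))
        _ (hC (window_anti w (le_max_left _ _) hy) s (by lia))
        ((ih s (by lia)).mono Ioi_subset_Ici_self)

lemma RightOblique.eventually_eqOn_Ioi [Finite A] (hf : IsCA f) (hX : IsCompact X)
    (h : RightOblique f X n) {x y : ℤ → A} (hx : x ∈ realm f X) (hy : y ∈ realm f X) {a : ℤ}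
    (hxy : ∀ᶠ t in atTop, EqOn (f^[t] x) (f^[t] y) (Ioi a)) (b : ℤ) :
    ∀ᶠ t in atTop, EqOn (f^[t] x) (f^[t] y) (Ioi b) := by
  obtain ⟨r, hr⟩ := hf.exists_hasRadius
  refine forall_of_monotone_of_sub_one
    (p := fun c => ∀ᶠ t in atTop, EqOn (f^[t] x) (f^[t] y) (Ioi c))
    (fun _ _ hcd hc => hc.mono fun _ ht => ht.mono (Ioi_subset_Ioi hcd)) (fun c hc => ?_) hxy b
  obtain ⟨U, hU, hXU, hUeq⟩ := h.exists_isOpen_eqOn hf.1 hr hX c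
  have hlate := (tendsto_sub_atTop_nat n).eventually (hc.and
    ((eventually_mem_of_mem_realm hU hXU hx).and (eventually_mem_of_mem_realm hU hXU hy)))
  filter_upwards [hlate, eventually_ge_atTop n] with t ⟨hct, hxt, hyt⟩ ht
  rw [← Nat.add_sub_of_le ht, iterate_add_apply, iterate_add_apply, Ioi_sub_one_eq_Ici]
  exact hUeq _ hxt _ hyt hct

end Oblique

section GenericVisits

variable [TopologicalSpace A] [DiscreteTopology A] {f : (ℤ → A) → (ℤ → A)}

lemma exists_eqOn_Ici_of_residual [Finite A] {P : (ℤ → A) → Prop}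
    (hP : ∀ᶠ x in residual (ℤ → A), P x)
    {U V : Set (ℤ → A)} (hU : IsOpen U) (hU' : U.Nonempty) (hV : IsOpen V) (hV' : V.Nonempty)
    (w : ℤ → A) (L : ℕ) :
    ∃ x ∈ U, ∃ y ∈ V, P x ∧ P y ∧
      ∃ N : ℤ, translate N x ∈ window w L ∧ EqOn x y (Ici (N - L)) := by
  obtain ⟨u, hu⟩ := hU'
  obtain ⟨v, hv⟩ := hV'
  obtain ⟨c, hcU, hcV⟩ : ∃ c, window u c ⊆ U ∧ window v c ⊆ V := by
    obtain ⟨a, ha⟩ := exists_window_subset hU hu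
    obtain ⟨b, hb⟩ := exists_window_subset hV hv
    exact ⟨max a b, (window_anti u (le_max_left a b)).trans ha,
      (window_anti v (le_max_right a b)).trans hb⟩
  let s : Set ℤ := Iio (c + 1)
  let N : ℤ := c + 1 + L
  let glue : (ℤ → A) × (ℤ → A) → ℤ → A := fun p => s.piecewise p.2 p.1
  let O : Set ((ℤ → A) × (ℤ → A)) :=
    {p | p.1 ∈ U ∧ translate N p.1 ∈ window w L ∧ glue p ∈ V}
  have hO : IsOpen O := (hU.preimage continuous_fst).inter
    (((isOpen_window w L).preimage ((translate N).continuous.comp continuous_fst)).inter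
      (hV.preimage (continuous_piecewise_prod s)))
  have hO' : (s.piecewise u (translate (-N) w), v) ∈ O := by
    have mem_s {i : ℤ} (hi : i ∈ Icc (-c : ℤ) c) : i ∈ s := show i < c + 1 by grind
    refine ⟨hcU fun i hi => piecewise_eq_of_mem _ _ _ (mem_s hi), fun i hi => ?_,
      hcV fun i hi => piecewise_eq_of_mem _ _ _ (mem_s hi)⟩
    have hi' : i + N ∉ s := not_lt.2 (show (c : ℤ) + 1 ≤ i + N by grind)
    exact (piecewise_eq_of_notMem _ _ _ hi').trans (congrArg w (add_neg_cancel_right i N))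
  obtain ⟨p, ⟨hpU, hpw, hpV⟩, hpP, hpP'⟩ :=
    (dense_of_mem_residual (residual_prod_piecewise s hP)).inter_open_nonempty O hO ⟨_, hO'⟩
  refine ⟨p.1, hpU, glue p, hpV, hpP, hpP', N, hpw, fun i hi => ?_⟩
  exact (piecewise_eq_of_notMem s p.2 p.1 (not_lt.2 (show (c : ℤ) + 1 ≤ i by grind))).symm

lemma RightOblique.dense_frequently_mem [Finite A] (hf : IsCA f) {n : ℕ}
    (h : RightOblique f (genLimitSet f) n) {W : Set (ℤ → A)} (hW : IsOpen W)
    (hWg : (W ∩ genLimitSet f).Nonempty) :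
    Dense {x | ∃ᶠ t in atTop, f^[t] x ∈ W} := by
  obtain ⟨z, hzW, hz⟩ := hWg
  have : Nonempty A := ⟨z 0⟩
  obtain ⟨m, hm⟩ := exists_window_subset hW hzW
  obtain ⟨U, hU, hU', hvisit⟩ :=
    exists_isOpen_residual_frequently_mem hf.1 (isOpen_window z m) fun havoid =>
      (disjoint_genLimitSet (isOpen_window z m) havoid).le_bot ⟨self_mem_window z m, hz⟩
  obtain ⟨w, L, hblock⟩ := h.exists_blocking hf
  refine dense_iff_inter_open.2 fun V hV hV' => ?_
  obtain ⟨x, hxU, y, hyV, ⟨hxvisit, hx⟩, ⟨-, hy⟩, N, hxw, hxy⟩ := exists_eqOn_Ici_of_residual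
    (hvisit.and (realm_genLimitSet_mem_residual f)) hU hU' hV hV' w L
  refine ⟨y, hyV, ?_⟩
  have hshifted : EqOn (translate N x) (translate N y) (Ici (-L)) := fun i hi =>
    hxy (show N - L ≤ i + N by grind)
  have hright (t : ℕ) : EqOn (f^[t] x) (f^[t] y) (Ioi (N - 1)) := fun i hi => by
    rw [← sub_add_cancel i N, (hf.iterate t).apply_add, (hf.iterate t).apply_add]
    exact hblock _ hxw _ hshifted t (show 0 ≤ i - N by grind)
  have hcentral := h.eventually_eqOn_Ioi hf (isClosed_genLimitSet f).isCompact hx hy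
    (Eventually.of_forall hright) (-m - 1)
  exact ((hxvisit hxU).and_eventually hcentral).mono fun t ⟨hxt, hxyt⟩ =>
    hm fun i hi => (hxyt (show -m - 1 < i by grind)).symm.trans (hxt hi)

theorem EventuallyOblique.dense_frequently_mem [Finite A] (hf : IsCA f)
    (h : EventuallyOblique f (genLimitSet f)) {W : Set (ℤ → A)} (hW : IsOpen W)
    (hWg : (W ∩ genLimitSet f).Nonempty) :
    Dense {x | ∃ᶠ t in atTop, f^[t] x ∈ W} := by
  obtain ⟨n, a, b, -, hb | ha, h⟩ := h
  · have hreversal {x : ℤ → A} (hx : x ∈ genLimitSet (reverse f)) : reversal x ∈ genLimitSet f :=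
      map_mem_genLimitSet reversal.continuous reversal.isOpenMap (semiconj_reverse f) hx
    have hob : RightOblique (reverse f) (genLimitSet (reverse f)) n := by
      refine hf.reverse.rightOblique_genLimitSet fun x hx y hy hxy => ?_
      have heq := h _ (hreversal hx) _ (hreversal hy) fun i _ hib => hxy (show 0 < -i by lia)
      rwa [← (semiconj_reverse f).iterate_right n x, ← (semiconj_reverse f).iterate_right n y,
        reversal_apply, reversal_apply, neg_zero] at heq
    have hWg' : (reversal ⁻¹' W ∩ genLimitSet (reverse f)).Nonempty := by
      obtain ⟨y, hyW, hy⟩ := hWg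
      refine ⟨reversal y, by rwa [mem_preimage, reversal_involutive], ?_⟩
      exact map_mem_genLimitSet reversal.continuous reversal.isOpenMap (reverse_semiconj f) hy
    have hdense := hob.dense_frequently_mem hf.reverse (hW.preimage reversal.continuous) hWg'
    refine (hdense.preimage reversal.isOpenMap).mono fun x hx => hx.mono fun t ht => ?_
    rwa [mem_preimage, (semiconj_reverse f).iterate_right t, reversal_involutive] at ht
  · exact (hf.rightOblique_genLimitSet fun x hx y hy hxy =>
      h x hx y hy fun i hai _ => hxy (show 0 < i by lia)).dense_frequently_mem hf hW hWg

end GenericVisits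

section Words

variable {x : ℤ → A} {i : ℤ} {n : ℕ}

lemma word_eq_map (x : ℤ → A) (i : ℤ) (n : ℕ) :
    word x i n = (List.range n).map fun k : ℕ => x (i + k) := by
  -- In the definition, `List.range n` is coerced to a list of integers in the list monad.
  have cast_list (l : List ℕ) : (do let a ← l; pure (a : ℤ) : List ℤ) = l.map Nat.cast := by
    induction l with
    | nil => rfl
    | cons a l ih => simpa using ih
  unfold word
  rw [cast_list, List.map_map]
  rfl

@[simp]
lemma length_word : (word x i n).length = n := by
  rw [word_eq_map, List.length_map, List.length_range]

@[simp]
lemma getElem_word {k : ℕ} (hk : k < (word x i n).length) : (word x i n)[k] = x (i + k) := by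
  simp only [word_eq_map, List.getElem_map, List.getElem_range]

lemma drop_word (k : ℕ) : (word x i n).drop k = word x (i + k) (n - k) :=
  List.ext_getElem (by simp) fun m _ _ => by simp [add_assoc]

lemma mem_cylinder {s : List A} :
    x ∈ cylinder s i ↔ ∀ k : Fin s.length, x (i + (k : ℕ)) = s[k] := by
  simp [cylinder, List.ext_getElem_iff, Fin.forall_iff]

lemma prefix_word_iff {s : List A} : s <+: word x i n ↔ s.length ≤ n ∧ x ∈ cylinder s i := by
  simp [mem_cylinder, List.prefix_iff_getElem, Fin.forall_iff, eq_comm]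

lemma cylinder_nonempty [Nonempty A] (s : List A) (i : ℤ) : (cylinder s i).Nonempty :=
  ⟨fun j => s.getD (j - i).toNat (Classical.arbitrary A), mem_cylinder.2 fun k => by simp⟩

lemma cylinder_word_eq_window (x : ℤ → A) (n : ℕ) :
    cylinder (word x (-n) (2 * n + 1)) (-n) = window x n := by
  ext y
  simp only [mem_cylinder, Fin.getElem_fin, getElem_word]
  refine ⟨fun h i hi => ?_, fun h k => ?_⟩
  · obtain ⟨hi₁, hi₂⟩ := hi
    have hk := h ⟨(i + n).toNat, by rw [length_word]; lia⟩
    rwa [show (-n + ((i + n).toNat : ℕ) : ℤ) = i by lia] at hk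
  · have hk : (k : ℕ) < 2 * n + 1 := k.2.trans_eq length_word
    exact h ⟨by lia, by lia⟩

lemma isClopen_cylinder [TopologicalSpace A] [DiscreteTopology A] (s : List A) (i : ℤ) :
    IsClopen (cylinder s i) := by
  have : cylinder s i = ⋂ k : Fin s.length, {x | x (i + (k : ℕ)) = s[k]} := by
    ext x
    rw [mem_cylinder, mem_iInter]
    rfl
  rw [this]
  exact isClopen_iInter_of_finite fun k => (isClopen_discrete {s[k]}).preimage (continuous_apply _)

end Words

section Language

variable [TopologicalSpace A] {f : (ℤ → A) → (ℤ → A)}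

lemma IsCA.mem_lang_genLimitSet_iff (hf : IsCA f) {s : List A} :
    s ∈ lang (genLimitSet f) ↔ (cylinder s 0 ∩ genLimitSet f).Nonempty := by
  constructor
  · rintro ⟨x, hx, i, hs⟩
    refine ⟨translate i x, mem_cylinder.2 fun k => ?_,
      map_mem_genLimitSet (translate i).continuous (translate i).isOpenMap
        (hf.translate_semiconj i) hx⟩
    rw [translate_apply, zero_add, add_comm]
    exact mem_cylinder.1 hs k
  · rintro ⟨x, hs, hx⟩
    exact ⟨x, hx, 0, hs⟩

theorem EventuallyOblique.mem_lang_genLimitSet_iff [Finite A] [Nonempty A] [DiscreteTopology A]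
    (hf : IsCA f) (hob : EventuallyOblique f (genLimitSet f)) {s : List A} :
    s ∈ lang (genLimitSet f) ↔
      ∀ (p : List A) (l : ℕ), ∃ t ≥ l, ∃ x ∈ cylinder p (-l), f^[t] x ∈ cylinder s 0 := by
  rw [hf.mem_lang_genLimitSet_iff]
  refine ⟨fun hs p l => ?_, fun h => ?_⟩
  · obtain ⟨x, hxp, hx⟩ := (hob.dense_frequently_mem hf (isClopen_cylinder s 0).isOpen
      hs).inter_open_nonempty _ (isClopen_cylinder p (-l)).isOpen (cylinder_nonempty p (-l))
    obtain ⟨t, ht, hxt⟩ := frequently_atTop.1 hx l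
    exact ⟨t, ht, x, hxp, hxt⟩
  · by_contra hs
    have hsub : genLimitSet f ⊆ (cylinder s 0)ᶜ := fun y hy hys => hs ⟨y, hys, hy⟩
    obtain ⟨q, T, hT⟩ :=
      (dense_uniformBasin hf.1 (isClopen_cylinder s 0).compl.isOpen hsub).nonempty
    obtain ⟨V, hVT, hV, hqV⟩ := mem_nhds_iff.1 hT
    obtain ⟨d, hd⟩ := exists_window_subset hV hqV
    obtain ⟨t, ht, x, hx, hxs⟩ := h (word q (-(max d T : ℕ)) (2 * max d T + 1)) (max d T)
    rw [cylinder_word_eq_window] at hx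
    exact hVT (hd (window_anti q (le_max_left d T) hx)) t (le_of_max_le_right ht) hxs

end Language

section LocalRule

variable {f : (ℤ → A) → (ℤ → A)} {r : ℕ}

/-- `F` is a local rule of radius `r` for `f`. The neighborhood of a cell is listed from its left
end, so that cell `i + r` reads the cells `i, …, i + 2r`. -/
def IsLocalRule (f : (ℤ → A) → (ℤ → A)) (F : List.Vector A (2 * r + 1) → A) : Prop :=
  ∀ (x : ℤ → A) (i : ℤ), f x (i + r) = F (List.Vector.ofFn fun k => x (i + (k : ℕ)))

lemma IsCA.exists_isLocalRule [TopologicalSpace A] [Nonempty A] (hf : IsCA f)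
    (hr : HasRadius f r) : ∃ F : List.Vector A (2 * r + 1) → A, IsLocalRule f F := by
  obtain ⟨a⟩ := ‹Nonempty A›
  refine ⟨fun v => f (fun j => v.toList.getD j.toNat a) r, fun x i => ?_⟩
  rw [add_comm, hf.apply_add]
  refine hr _ _ _ fun j hj => ?_
  obtain ⟨hj₁, hj₂⟩ := hj
  rw [List.Vector.toList_ofFn, List.getD_eq_getElem _ _ (by rw [List.length_ofFn]; lia),
    List.getElem_ofFn, translate_apply]
  exact congrArg x (by simp; lia)

/-- The action of the local rule `F` on finite words, shortening them by `2r`. The letter `a` is a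
default value that is never read. -/
def wordStep (a : A) (F : List.Vector A (2 * r + 1) → A) (u : List A) : List A :=
  (List.range (u.length - 2 * r)).map fun k => F (List.Vector.ofFn fun i => u.getD (k + i) a)

lemma IsLocalRule.wordStep_word {F : List.Vector A (2 * r + 1) → A} (hF : IsLocalRule f F) (a : A)
    (x : ℤ → A) (i : ℤ) (n : ℕ) :
    wordStep a F (word x i n) = word (f x) (i + r) (n - 2 * r) := by
  rw [wordStep, word_eq_map _ (i + r), length_word]
  refine List.map_congr_left fun k hk => ?_
  have hk' : k < n - 2 * r := List.mem_range.1 hk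
  rw [add_right_comm, hF]
  congr 2
  ext j
  rw [List.getD_eq_getElem _ _ (by rw [length_word]; lia), getElem_word]
  exact congrArg x (by push_cast; ring)

lemma IsLocalRule.iterate_wordStep_word {F : List.Vector A (2 * r + 1) → A} (hF : IsLocalRule f F)
    (a : A) (x : ℤ → A) (i : ℤ) (n t : ℕ) :
    (wordStep a F)^[t] (word x i n) = word (f^[t] x) (i + (r * t : ℕ)) (n - 2 * (r * t)) := by
  induction t with
  | zero => simp
  | succ t ih =>
    rw [iterate_succ_apply', ih, hF.wordStep_word, iterate_succ_apply']
    congr 1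
    · push_cast
      ring
    · rw [Nat.mul_succ]
      lia

/-- The decidable matrix of the `Π⁰₂` definition of the language: for `q = (p, l)`, the pair
`z = (t, u)` records that some configuration, whose relevant part is the word `u` read from position
`-l - r * t`, carries `p` at position `-l` and visits `[s]_0` at time `t ≥ l`. -/
def IsVisitWitness (a : A) (F : List.Vector A (2 * r + 1) → A) (s : List A) (q : List A × ℕ)
    (z : ℕ × List A) : Prop :=
  q.2 ≤ z.1 ∧ q.1 <+: z.2.drop (r * z.1) ∧ s <+: ((wordStep a F)^[z.1] z.2).drop q.2

lemma IsLocalRule.exists_isVisitWitness_iff [Nonempty A] {F : List.Vector A (2 * r + 1) → A}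
    (hF : IsLocalRule f F) (a : A) (p s : List A) (l : ℕ) :
    (∃ z, IsVisitWitness a F s (p, l) z) ↔
      ∃ t ≥ l, ∃ x ∈ cylinder p (-l), f^[t] x ∈ cylinder s 0 := by
  constructor
  · rintro ⟨⟨t, u⟩, ht, hp, hs⟩
    obtain ⟨x, hx⟩ := cylinder_nonempty u (-l - (r * t : ℕ))
    rw [← show word x _ u.length = u from hx] at hp hs
    rw [drop_word, sub_add_cancel, prefix_word_iff] at hp
    rw [hF.iterate_wordStep_word, drop_word, sub_add_cancel, neg_add_cancel, prefix_word_iff] at hs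
    exact ⟨t, ht, x, hp.2, hs.2⟩
  · rintro ⟨t, ht, x, hp, hs⟩
    refine ⟨⟨t, word x (-l - (r * t : ℕ)) (2 * (r * t) + p.length + l + s.length)⟩, ht, ?_, ?_⟩
    · rw [drop_word, sub_add_cancel, prefix_word_iff]
      exact ⟨by lia, hp⟩
    · rw [hF.iterate_wordStep_word, drop_word, sub_add_cancel, neg_add_cancel, prefix_word_iff]
      exact ⟨by lia, hs⟩

end LocalRule

section Computability

lemma primrec_wordStep [Finite A] [Primcodable A] {r : ℕ} (a : A)
    (F : List.Vector A (2 * r + 1) → A) : Primrec (wordStep a F) := by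
  refine Primrec.list_map (Primrec.list_range.comp
    (Primrec.nat_sub.comp Primrec.list_length (Primrec.const _))) ?_
  refine (Primrec.dom_finite F).comp (Primrec.vector_ofFn fun i => ?_)
  exact (Primrec.list_getD a).comp Primrec.fst
    (Primrec.nat_add.comp Primrec.snd (Primrec.const _))

variable {X Y Z : Type*} [Primcodable X]

lemma primrecPred_prefix_drop [Primcodable A] {u v : X → List A} {k : X → ℕ} (hu : Primrec u)
    (hk : Primrec k) (hv : Primrec v) : PrimrecPred fun c => u c <+: (v c).drop (k c) := by
  simp only [List.prefix_iff_eq_take]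
  exact Primrec.eq.comp hu (Primrec.list_take.comp (Primrec.list_length.comp hu)
    (Primrec.list_drop.comp hk hv))

lemma primrecPred_isVisitWitness [Finite A] [Primcodable A] {r : ℕ} (a : A)
    (F : List.Vector A (2 * r + 1) → A) :
    PrimrecPred fun c : (List A × List A × ℕ) × ℕ × List A =>
      IsVisitWitness a F c.1.1 c.1.2 c.2 := by
  have hs : Primrec fun c : (List A × List A × ℕ) × ℕ × List A => c.1.1 :=
    Primrec.fst.comp Primrec.fst
  have hq : Primrec fun c : (List A × List A × ℕ) × ℕ × List A => c.1.2 :=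
    Primrec.snd.comp Primrec.fst
  have ht : Primrec fun c : (List A × List A × ℕ) × ℕ × List A => c.2.1 :=
    Primrec.fst.comp Primrec.snd
  have hu : Primrec fun c : (List A × List A × ℕ) × ℕ × List A => c.2.2 :=
    Primrec.snd.comp Primrec.snd
  have hl := Primrec.snd.comp hq
  exact (Primrec.nat_le.comp hl ht).and
    ((primrecPred_prefix_drop (Primrec.fst.comp hq)
      (Primrec.nat_mul.comp (Primrec.const r) ht) hu).and
    (primrecPred_prefix_drop hs hl
      (Primrec.nat_iterate ht hu ((primrec_wordStep a F).comp Primrec.snd).to₂)))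

lemma primrecPred_exists_encode_eq {P : X → Prop} (hP : PrimrecPred P) :
    PrimrecPred fun n : ℕ => ∃ a, Encodable.encode a = n ∧ P a := by
  classical
  refine (Primrec.eq.comp (Primrec.option_map Primrec.decode₂ (hP.decide.comp Primrec.snd).to₂)
    (Primrec.const (some true))).of_eq fun n => ?_
  simp only [Option.map_eq_some_iff, Encodable.decode₂_eq_some, decide_eq_true_eq]

lemma exists_encode_eq_and_exists_iff [Primcodable Y] {P : X × Y → Prop} {m : ℕ} :
    (∃ a, Encodable.encode a = m ∧ ∃ b, P (a, b)) ↔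
      ∃ k, ∃ c, Encodable.encode c = Nat.pair m k ∧ P c := by
  simp only [Prod.exists, Encodable.encode_prod_val, Nat.pair_eq_pair]
  grind

variable [Primcodable Y] [Primcodable Z]

lemma natSigma_two_of_primrecPred {Q : (X × Y) × Z → Prop} (hQ : PrimrecPred Q) :
    NatSigma 2 fun m => ∃ a : X, Encodable.encode a = m ∧ ∃ b, ∀ c, ¬ Q ((a, b), c) := by
  refine ⟨fun n => ∃ d : X × Y, Encodable.encode d = n ∧ ∀ c, ¬ Q (d, c),
    ⟨fun n => n.unpair.1 ∉ range (Encodable.encode : X × Y → ℕ) ∨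
      ∃ e, Encodable.encode e = n ∧ Q e, ?_, fun n => ?_⟩,
    fun m => exists_encode_eq_and_exists_iff (P := fun d => ∀ c, ¬ Q (d, c))⟩
  · exact ((Primcodable.mem_range_encode.comp (Primrec.fst.comp Primrec.unpair)).not.or
      (primrecPred_exists_encode_eq hQ)).not.computablePred
  · simp only [Nat.unpair_pair, exists_or, exists_const, ← exists_encode_eq_and_exists_iff]
    by_cases hn : n ∈ range (Encodable.encode : X × Y → ℕ)
    · obtain ⟨d, rfl⟩ := hn
      simp [Encodable.encode_inj]
    · have h_none (P : X × Y → Prop) : ¬ ∃ d, Encodable.encode d = n ∧ P d :=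
        fun ⟨d, hd, _⟩ => hn ⟨d, hd⟩
      exact iff_of_true (h_none _) (Or.inl hn)

lemma piLang_two_of_primrecPred [Primcodable A] {L : Set (List A)}
    {Q : (List A × Y) × Z → Prop} (hQ : PrimrecPred Q)
    (hL : ∀ w, w ∈ L ↔ ∀ y, ∃ z, Q ((w, y), z)) : PiLang 2 L := by
  have compl_eq : {w | w ∉ L} = {w | ∃ y, ∀ z, ¬ Q ((w, y), z)} := by
    ext w
    simp only [mem_ofPred_eq, hL, not_forall, not_exists]
  rw [PiLang, compl_eq]
  exact natSigma_two_of_primrecPred hQ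

end Computability

/-- if the restriction of `f` to `ω̃(f)` is eventually oblique, then the
language of `ω̃(f)` is `Π⁰₂`. -/
theorem stmt10 [Fintype A] [Nonempty A] [Primcodable A] [TopologicalSpace A]
    [DiscreteTopology A] (f : (ℤ → A) → (ℤ → A)) (hf : IsCA f)
    (hob : EventuallyOblique f (genLimitSet f)) :
    PiLang 2 (lang (genLimitSet f)) := by
  obtain ⟨r, hr⟩ := hf.exists_hasRadius
  obtain ⟨F, hF⟩ := hf.exists_isLocalRule hr
  let a : A := Classical.arbitrary A
  refine piLang_two_of_primrecPred (primrecPred_isVisitWitness a F) fun s => ?_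
  simp only [Prod.forall, hF.exists_isVisitWitness_iff a, hob.mem_lang_genLimitSet_iff hf]

end Gls
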